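/- Let π: (M, φ, ξ, η, g) → (M', J, g') be a contact-complex Riemannian submersion with dim M ≥ 5 satisfying dΦ = -2ω ∧ Φ, whose fibres have dimension 2r+1. Then at each point the trace N = Σ_{i=1}^{r}(T_{u_i} u_i + T_{φu_i} φu_i) + T_ξ ξ, computed with respect to an orthonormal basis {u_1, ..., u_r, φu_1, ..., φu_r, ξ} of the vertical space, satisfies N = 2r·h(B) + T_ξ ξ, where B is the Lee vector field; thus the (unnormalized) mean curvature vector of the fibres equals 2r·h(B) + T_ξ ξ. -/

import Mathlib

/-!
It suffices to show `T_u u + T_{φu} φu = 2 h(B)` for a unit vertical `u` with `η(u) = 0`. Both sides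
are horizontal, so one tests them against a horizontal `X`. As `u, φu` and `[u, φu]` are vertical
and `Φ(u, φu) = -1` is constant, only two terms of `dΦ(u, φu, X)` survive:
`3 dΦ(u, φu, X) = g([X, u], u) - g([φu, X], φu) = g(X, ∇_u u + ∇_{φu} φu)`,
the last step because `g(∇_X u, u) = 0 = g(∇_X φu, φu)` for unit fields (`g_bracket_unit`).
On the other side `-6 (ω ∧ Φ)(u, φu, X) = 2 ω(X) = 2 g(X, B)` (`g_leeVF`). Comparing the two gives
`g_pair`; the claim is the sum of these identities over the adapted frame.
-/

noncomputable section

/-!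
Algebraic model of a contact-complex Riemannian submersion
π : (M^{2m+1}, φ, ξ, η, g) → (M'^{2n}, J, g').

Smooth functions on M (resp. M') are modelled by a commutative ℝ-algebra `C`
(resp. `C'`), vector fields on M (resp. M') by a module `V` over `C`
(resp. `V'` over `C'`).  The structure `CCSub` bundles:
* the almost contact metric structure (φ, ξ, η, g) of the total space,
* its Levi-Civita connection `nabla`, Lie bracket and the action `D` of
  vector fields on functions,
* the vertical/horizontal projections `v`, `h` of the submersion,
* adapted orthonormal frames (used to express the traces occurring in the
  codifferentials δη, δΦ, in the Lee form and in the mean curvature of the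
  fibres),
* the almost Hermitian base (J, g') with its Levi-Civita connection, and
* the differential π_* (`push`) and pull-back of functions (`pull`), with the
  Riemannian-submersion property and the contact-complex compatibility
  J ∘ π_* = π_* ∘ φ.

Conventions: dΦ(X,Y,Z) = (1/3)(XΦ(Y,Z) + YΦ(Z,X) + ZΦ(X,Y)
  - Φ([X,Y],Z) - Φ([Y,Z],X) - Φ([Z,X],Y)),
(ω∧Φ)(X,Y,Z) = (1/3)(ω(X)Φ(Y,Z) + ω(Y)Φ(Z,X) + ω(Z)Φ(X,Y)),
dη(X,Y) = (1/2)(Xη(Y) - Yη(X) - η([X,Y])),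
(η∧ω)(X,Y) = (1/2)(η(X)ω(Y) - η(Y)ω(X)),
as in the paper (which writes 3dΦ(X,Y,Z) for the 6-term sum).
-/

structure CCSub (C : Type) [CommRing C] [Algebra ℝ C]
    (V : Type) [AddCommGroup V] [Module C V]
    (C' : Type) [CommRing C'] [Algebra ℝ C']
    (V' : Type) [AddCommGroup V'] [Module C' V'] : Type where
  /-- dim M = 2m+1 -/
  m : ℕ
  /-- dim M' = 2n -/
  n : ℕ
  /-- the fibres have dimension 2r+1 -/
  r : ℕ
  dim_eq : m = n + r
  -- the Riemannian metric of M
  g : V → V → C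
  g_symm : ∀ X Y, g X Y = g Y X
  g_add_left : ∀ X Y Z, g (X + Y) Z = g X Z + g Y Z
  g_smul_left : ∀ (a : C) (X Y : V), g (a • X) Y = a * g X Y
  -- the almost contact structure
  phi : V → V
  phi_add : ∀ X Y, phi (X + Y) = phi X + phi Y
  phi_smul : ∀ (a : C) (X : V), phi (a • X) = a • phi X
  xi : V
  eta : V → C
  eta_eq : ∀ X, eta X = g X xi
  acm_phi_phi : ∀ X, phi (phi X) = -X + eta X • xi
  acm_eta_xi : eta xi = 1
  acm_compat : ∀ X Y, g (phi X) (phi Y) = g X Y - eta X * eta Y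
  -- derivations, Lie bracket and the Levi-Civita connection of M
  D : V → C → C
  D_add : ∀ X (a b : C), D X (a + b) = D X a + D X b
  D_mul : ∀ X (a b : C), D X (a * b) = D X a * b + a * D X b
  D_add_left : ∀ X Y (a : C), D (X + Y) a = D X a + D Y a
  D_smul_left : ∀ (a : C) X (b : C), D (a • X) b = a * D X b
  bracket : V → V → V
  nabla : V → V → V
  nabla_add_left : ∀ X Y Z, nabla (X + Y) Z = nabla X Z + nabla Y Z
  nabla_smul_left : ∀ (a : C) X Y, nabla (a • X) Y = a • nabla X Y
  nabla_add_right : ∀ X Y Z, nabla X (Y + Z) = nabla X Y + nabla X Z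
  nabla_leibniz : ∀ X (a : C) Y, nabla X (a • Y) = D X a • Y + a • nabla X Y
  torsion_free : ∀ X Y, bracket X Y = nabla X Y - nabla Y X
  metric_compat : ∀ X Y Z, D X (g Y Z) = g (nabla X Y) Z + g Y (nabla X Z)
  -- vertical and horizontal projections of the submersion
  v : V → V
  h : V → V
  v_add : ∀ X Y, v (X + Y) = v X + v Y
  v_smul : ∀ (a : C) X, v (a • X) = a • v X
  h_eq : ∀ X, h X = X - v X
  v_idem : ∀ X, v (v X) = v X
  vh_orth : ∀ X Y, g (v X) (h Y) = 0
  xi_vertical : v xi = xi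
  phi_vertical : ∀ X, v (phi (v X)) = phi (v X)
  phi_horizontal : ∀ X, v (phi (h X)) = 0
  bracket_vertical : ∀ X Y, v (bracket (v X) (v Y)) = bracket (v X) (v Y)
  -- a global orthonormal frame of M, used to express traces
  frame : Fin (2 * m + 1) → V
  frame_orthonormal : ∀ i j, g (frame i) (frame j) = if i = j then 1 else 0
  frame_complete : ∀ X, X = ∑ i, g X (frame i) • frame i
  -- an adapted vertical frame {u_1,...,u_r, φu_1,...,φu_r, ξ}
  u : Fin r → V
  u_vertical : ∀ i, v (u i) = u i
  u_orthonormal : ∀ i j, g (u i) (u j) = if i = j then 1 else 0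
  u_phi_orth : ∀ i j, g (u i) (phi (u j)) = 0
  u_eta : ∀ i, eta (u i) = 0
  u_complete : ∀ X,
    v X = (∑ i, g X (u i) • u i) + (∑ i, g X (phi (u i)) • phi (u i)) + eta X • xi
  -- the almost Hermitian base (M', J, g')
  g' : V' → V' → C'
  g'_symm : ∀ X Y, g' X Y = g' Y X
  J : V' → V'
  J_J : ∀ X, J (J X) = -X
  J_compat : ∀ X Y, g' (J X) (J Y) = g' X Y
  D' : V' → C' → C'
  bracket' : V' → V' → V'
  nabla' : V' → V' → V'
  torsion_free' : ∀ X Y, bracket' X Y = nabla' X Y - nabla' Y X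
  metric_compat' : ∀ X Y Z, D' X (g' Y Z) = g' (nabla' X Y) Z + g' Y (nabla' X Z)
  frame' : Fin (2 * n) → V'
  frame'_orthonormal : ∀ i j, g' (frame' i) (frame' j) = if i = j then 1 else 0
  frame'_complete : ∀ X, X = ∑ i, g' X (frame' i) • frame' i
  -- the submersion π : pull-back of functions and push-forward π_*
  pull : C' →+* C
  pull_algebraMap : ∀ x : ℝ, pull (algebraMap ℝ C' x) = algebraMap ℝ C x
  push : V → V'
  push_add : ∀ X Y, push (X + Y) = push X + push Y
  push_vertical : ∀ X, push (v X) = 0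
  push_isometry : ∀ X Y, pull (g' (push X) (push Y)) = g (h X) (h Y)
  /-- the defining property of a contact-complex submersion: J ∘ π_* = π_* ∘ φ -/
  contact_complex : ∀ X, push (phi X) = J (push X)

namespace CCSub

variable {C : Type} [CommRing C] [Algebra ℝ C] {V : Type} [AddCommGroup V] [Module C V]
  {C' : Type} [CommRing C'] [Algebra ℝ C'] {V' : Type} [AddCommGroup V'] [Module C' V']

variable (S : CCSub C V C' V')

/-- `X` is a horizontal vector field. -/
def Horizontal (X : V) : Prop := S.v X = 0

/-- `X` is a vertical vector field. -/
def Vertical (X : V) : Prop := S.v X = X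

/-- `X` is a basic (projectable horizontal) vector field. -/
def Basic (X : V) : Prop :=
  S.v X = 0 ∧ ∀ a : C', S.D X (S.pull a) = S.pull (S.D' (S.push X) a)

/-- The fundamental 2-form Φ(X,Y) = g(X, φY). -/
def Phi (X Y : V) : C := S.g X (S.phi Y)

/-- The O'Neill tensor T: T_E F = h∇_{vE} vF + v∇_{vE} hF. -/
def T (E F : V) : V := S.h (S.nabla (S.v E) (S.v F)) + S.v (S.nabla (S.v E) (S.h F))

/-- The O'Neill tensor A: A_E F = h∇_{hE} vF + v∇_{hE} hF. -/
def A (E F : V) : V := S.h (S.nabla (S.h E) (S.v F)) + S.v (S.nabla (S.h E) (S.h F))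

/-- The covariant derivative (∇_X φ)Y. -/
def nablaPhi (X Y : V) : V := S.nabla X (S.phi Y) - S.phi (S.nabla X Y)

/-- (∇_X Φ)(Y,Z) = g(Y, (∇_X φ)Z). -/
def nablaPhiForm (X Y Z : V) : C := S.g Y (S.nablaPhi X Z)

/-- The Nijenhuis tensor of φ. -/
def Nphi (X Y : V) : V :=
  S.phi (S.phi (S.bracket X Y)) + S.bracket (S.phi X) (S.phi Y)
    - S.phi (S.bracket X (S.phi Y)) - S.phi (S.bracket (S.phi X) Y)

/-- The exterior differential dΦ. -/
def dPhi (X Y Z : V) : C :=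
  algebraMap ℝ C (1/3) *
    (S.D X (S.Phi Y Z) + S.D Y (S.Phi Z X) + S.D Z (S.Phi X Y)
      - S.Phi (S.bracket X Y) Z - S.Phi (S.bracket Y Z) X - S.Phi (S.bracket Z X) Y)

/-- The exterior differential of a 1-form on M. -/
def dOne (α : V → C) (X Y : V) : C :=
  algebraMap ℝ C (1/2) * (S.D X (α Y) - S.D Y (α X) - α (S.bracket X Y))

/-- dη. -/
def dEta (X Y : V) : C := S.dOne S.eta X Y

/-- The wedge product α ∧ Φ of a 1-form with the fundamental 2-form. -/
def wedgePhi (α : V → C) (X Y Z : V) : C :=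
  algebraMap ℝ C (1/3) * (α X * S.Phi Y Z + α Y * S.Phi Z X + α Z * S.Phi X Y)

/-- The wedge product of two 1-forms on M. -/
def wedgeOne (_S : CCSub C V C' V') (α β : V → C) (X Y : V) : C :=
  algebraMap ℝ C (1/2) * (α X * β Y - α Y * β X)

/-- The codifferential δη = -Σ g(∇_{e_i} ξ, e_i). -/
def deltaEta : C := -(∑ i, S.g (S.nabla (S.frame i) S.xi) (S.frame i))

/-- The 1-form δΦ, δΦ(Z) = Σ g((∇_{e_i} φ)e_i, Z). -/
def deltaPhiForm (Z : V) : C := ∑ i, S.g (S.nablaPhi (S.frame i) (S.frame i)) Z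

/-- The Lee form of M (m ≥ 2): ω = -(1/(2(m-1)))(δΦ∘φ + ∇_ξη) + (δη/(2m))η,
using (∇_ξη)(X) = g(X, ∇_ξξ). -/
def lee (X : V) : C :=
  algebraMap ℝ C (-(1:ℝ) / (2 * ((S.m : ℝ) - 1))) *
      (S.deltaPhiForm (S.phi X) + S.g X (S.nabla S.xi S.xi))
    + algebraMap ℝ C (1 / (2 * (S.m : ℝ))) * (S.deltaEta * S.eta X)

/-- The Lee vector field B = ω^♯. -/
def leeVF : V := ∑ i, S.lee (S.frame i) • S.frame i

/-- The condition dΦ = -2 ω ∧ Φ, ω being the Lee form of M. -/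
def LeeCond : Prop := ∀ X Y Z, S.dPhi X Y Z = (-2 : C) * S.wedgePhi S.lee X Y Z

/-! ### The base space (M', J, g') -/

/-- The fundamental form Ω(X,Y) = g'(X, JY) of the base. -/
def Omega (X Y : V') : C' := S.g' X (S.J Y)

/-- (∇'_X J)Y on the base. -/
def nablaJ (X Y : V') : V' := S.nabla' X (S.J Y) - S.J (S.nabla' X Y)

/-- The Nijenhuis tensor of J. -/
def NJ (X Y : V') : V' :=
  S.J (S.J (S.bracket' X Y)) + S.bracket' (S.J X) (S.J Y)
    - S.J (S.bracket' X (S.J Y)) - S.J (S.bracket' (S.J X) Y)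

/-- The exterior differential dΩ. -/
def dOmega (X Y Z : V') : C' :=
  algebraMap ℝ C' (1/3) *
    (S.D' X (S.Omega Y Z) + S.D' Y (S.Omega Z X) + S.D' Z (S.Omega X Y)
      - S.Omega (S.bracket' X Y) Z - S.Omega (S.bracket' Y Z) X - S.Omega (S.bracket' Z X) Y)

/-- The exterior differential of a 1-form on M'. -/
def dOne' (α : V' → C') (X Y : V') : C' :=
  algebraMap ℝ C' (1/2) * (S.D' X (α Y) - S.D' Y (α X) - α (S.bracket' X Y))

/-- The wedge product β ∧ Ω on the base. -/
def wedgeOmega (α : V' → C') (X Y Z : V') : C' :=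
  algebraMap ℝ C' (1/3) * (α X * S.Omega Y Z + α Y * S.Omega Z X + α Z * S.Omega X Y)

/-- The 1-form δΩ on the base. -/
def deltaOmegaForm (Z : V') : C' := ∑ i, S.g' (S.nablaJ (S.frame' i) (S.frame' i)) Z

/-- The Lee form of the base (n ≥ 2): β = -(1/(2(n-1))) δΩ∘J. -/
def lee' (X : V') : C' :=
  algebraMap ℝ C' (-(1:ℝ) / (2 * ((S.n : ℝ) - 1))) * S.deltaOmegaForm (S.J X)

/-- The base is Kähler: ∇'J = 0. -/
def Kaehler : Prop := ∀ X Y, S.nabla' X (S.J Y) = S.J (S.nabla' X Y)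

/-- The base is almost Kähler: dΩ = 0. -/
def AlmostKaehler : Prop := ∀ X Y Z, S.dOmega X Y Z = 0

/-- The base belongs to the Gray–Hervella class W₂ ⊕ W₄: dΩ = -2 β ∧ Ω. -/
def W2W4 : Prop := ∀ X Y Z, S.dOmega X Y Z = (-2 : C') * S.wedgeOmega S.lee' X Y Z

/-- The base belongs to the Gray–Hervella class W₄: J integrable and dΩ = -2 β ∧ Ω. -/
def W4 : Prop := (∀ X Y, S.NJ X Y = 0) ∧ S.W2W4

/-- The base is locally conformal almost Kähler: it is a W₂ ⊕ W₄-manifold with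
closed Lee form. -/
def LCAlmostKaehler : Prop := S.W2W4 ∧ ∀ X Y, S.dOne' S.lee' X Y = 0

/-- The base is locally conformal Kähler:
(∇'_X Ω)(Y,Z) = β(Y)Ω(X,Z) - β(Z)Ω(X,Y) + β(JY)g'(X,Z) - β(JZ)g'(X,Y),
with closed Lee form β. -/
def LCKaehler : Prop :=
  (∀ X Y Z, S.g' Y (S.nablaJ X Z) =
      S.lee' Y * S.Omega X Z - S.lee' Z * S.Omega X Y
        + S.lee' (S.J Y) * S.g' X Z - S.lee' (S.J Z) * S.g' X Y)
    ∧ ∀ X Y, S.dOne' S.lee' X Y = 0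

/-! ### The fibres -/

/-- The covariant derivative (∇̂_U φ̂)W of the induced structure on the fibres,
∇̂ being the induced connection v ∘ ∇. -/
def vNablaPhi (U W : V) : V := S.v (S.nabla U (S.phi W)) - S.phi (S.v (S.nabla U W))

/-- The codifferential δ̂η̂ of the fibres. -/
def deltaHatEta : C :=
  -((∑ i, S.g (S.v (S.nabla (S.u i) S.xi)) (S.u i))
    + ∑ i, S.g (S.v (S.nabla (S.phi (S.u i)) S.xi)) (S.phi (S.u i)))

/-- The 1-form δ̂Φ̂ of the fibres. -/
def deltaHatPhiForm (Z : V) : C :=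
  (∑ i, S.g (S.vNablaPhi (S.u i) (S.u i)) Z)
    + (∑ i, S.g (S.vNablaPhi (S.phi (S.u i)) (S.phi (S.u i))) Z)
    + S.g (S.vNablaPhi S.xi S.xi) Z

/-- The Lee form ω̂ of the fibres (r ≥ 2). -/
def leeHat (U : V) : C :=
  algebraMap ℝ C (-(1:ℝ) / (2 * ((S.r : ℝ) - 1))) *
      (S.deltaHatPhiForm (S.phi U) + S.g U (S.v (S.nabla S.xi S.xi)))
    + algebraMap ℝ C (1 / (2 * (S.r : ℝ))) * (S.deltaHatEta * S.eta U)

/-- The Lee form ω̂ of 3-dimensional fibres (r = 1): ω̂ = ∇̂_ξη̂ + (δ̂η̂/2)η̂. -/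
def leeHat1 (U : V) : C :=
  S.g U (S.v (S.nabla S.xi S.xi)) + algebraMap ℝ C (1/2) * (S.deltaHatEta * S.eta U)

/-- The trace of T on the fibres (the unnormalized mean curvature vector
N = Σ (T_{u_i}u_i + T_{φu_i}φu_i) + T_ξξ of the fibres). -/
def meanCurv : V :=
  (∑ i, (S.T (S.u i) (S.u i) + S.T (S.phi (S.u i)) (S.phi (S.u i)))) + S.T S.xi S.xi

/-! ### Classes of almost contact metric structures on the total space -/

/-- M is almost cosymplectic: dΦ = 0 and dη = 0. -/
def AlmostCosymplectic : Prop :=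
  (∀ X Y Z, S.dPhi X Y Z = 0) ∧ ∀ X Y, S.dEta X Y = 0

/-- M is normal: N_φ + 2dη ⊗ ξ = 0. -/
def Normal : Prop := ∀ X Y, S.Nphi X Y + ((2 : C) * S.dEta X Y) • S.xi = 0

/-- M is quasi-Sasakian: dΦ = 0 and M normal. -/
def QuasiSasakian : Prop := (∀ X Y Z, S.dPhi X Y Z = 0) ∧ S.Normal

/-- M is α-Sasakian: (∇_X φ)Y = α(g(φX,Y)ξ - η(Y)X). -/
def AlphaSasakian (a : ℝ) : Prop :=
  ∀ X Y, S.nablaPhi X Y = algebraMap ℝ C a • (S.g (S.phi X) Y • S.xi - S.eta Y • X)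

/-- M is α-Kenmotsu: (∇_X φ)Y = α(g(φX,Y)ξ - η(Y)φX). -/
def AlphaKenmotsu (a : ℝ) : Prop :=
  ∀ X Y, S.nablaPhi X Y = algebraMap ℝ C a • (S.g (S.phi X) Y • S.xi - S.eta Y • S.phi X)

/-- M is a C₁₂-manifold: (∇_X φ)Y = -η(X)((∇_ξη)(φY)ξ + η(Y)φ(∇_ξξ)). -/
def C12 : Prop :=
  ∀ X Y, S.nablaPhi X Y =
    -(S.eta X) • (S.g (S.phi Y) (S.nabla S.xi S.xi) • S.xi
      + S.eta Y • S.phi (S.nabla S.xi S.xi))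

/-- M is locally conformal almost cosymplectic: dΦ = -2ω∧Φ and dη = η∧ω,
ω being the Lee form. -/
def LCAlmostCosymplectic : Prop :=
  S.LeeCond ∧ ∀ X Y, S.dEta X Y = S.wedgeOne S.eta S.lee X Y

/-- M is locally conformal cosymplectic:
(∇_X Φ)(Y,Z) = ω(Y)Φ(X,Z) - ω(Z)Φ(X,Y) + ω(φY)g(X,Z) - ω(φZ)g(X,Y). -/
def LCCosymplectic : Prop :=
  ∀ X Y Z, S.nablaPhiForm X Y Z =
    S.lee Y * S.Phi X Z - S.lee Z * S.Phi X Y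
      + S.lee (S.phi Y) * S.g X Z - S.lee (S.phi Z) * S.g X Y

/-- M belongs to the Chinea–Gonzalez class C₄ ⊕ C₆ ⊕ C₇:
M is normal and dΦ = -2ω∧Φ. -/
def ClassC4C6C7 : Prop := S.Normal ∧ S.LeeCond

/-! ### Classes of the structures induced on the fibres -/

/-- The fibres inherit an almost cosymplectic structure. -/
def FibreAlmostCosymplectic : Prop :=
  (∀ U W₁ W₂, S.Vertical U → S.Vertical W₁ → S.Vertical W₂ → S.dPhi U W₁ W₂ = 0)
    ∧ ∀ U W, S.Vertical U → S.Vertical W → S.dEta U W = 0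

/-- The fibres inherit a quasi-Sasakian structure. -/
def FibreQuasiSasakian : Prop :=
  (∀ U W₁ W₂, S.Vertical U → S.Vertical W₁ → S.Vertical W₂ → S.dPhi U W₁ W₂ = 0)
    ∧ ∀ U W, S.Vertical U → S.Vertical W →
        S.Nphi U W + ((2 : C) * S.dEta U W) • S.xi = 0

/-- The fibres inherit a cosymplectic structure: ∇̂φ̂ = 0. -/
def FibreCosymplectic : Prop :=
  ∀ U W, S.Vertical U → S.Vertical W → S.vNablaPhi U W = 0

/-- The fibres inherit an α-Sasakian structure. -/
def FibreAlphaSasakian (a : ℝ) : Prop :=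
  ∀ U W, S.Vertical U → S.Vertical W →
    S.vNablaPhi U W = algebraMap ℝ C a • (S.g (S.phi U) W • S.xi - S.eta W • U)

/-- The fibres inherit a C₁₂-structure. -/
def FibreC12 : Prop :=
  ∀ U W, S.Vertical U → S.Vertical W →
    S.vNablaPhi U W =
      -(S.eta U) • (S.g (S.phi W) (S.v (S.nabla S.xi S.xi)) • S.xi
        + S.eta W • S.phi (S.v (S.nabla S.xi S.xi)))

/-- The fibres inherit a locally conformal almost cosymplectic structure
(their Lee form being ω̂). -/
def FibreLCAlmostCosymplectic : Prop :=
  (∀ U W₁ W₂, S.Vertical U → S.Vertical W₁ → S.Vertical W₂ →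
    S.dPhi U W₁ W₂ = (-2 : C) * S.wedgePhi S.leeHat U W₁ W₂)
    ∧ ∀ U W, S.Vertical U → S.Vertical W → S.dEta U W = S.wedgeOne S.eta S.leeHat U W

/-- The fibres inherit a locally conformal cosymplectic structure
(their Lee form being ω̂). -/
def FibreLCCosymplectic : Prop :=
  ∀ U W₁ W₂, S.Vertical U → S.Vertical W₁ → S.Vertical W₂ →
    S.g W₁ (S.vNablaPhi U W₂) =
      S.leeHat W₁ * S.Phi U W₂ - S.leeHat W₂ * S.Phi U W₁
        + S.leeHat (S.phi W₁) * S.g U W₂ - S.leeHat (S.phi W₂) * S.g U W₁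

/-- The 3-dimensional fibres fall in the Chinea–Gonzalez class C₉ ⊕ C₁₂
(within the class C₅ ⊕ C₆ ⊕ C₉ ⊕ C₁₂ of all 3-dimensional almost contact
metric manifolds, this means that the C₅- and C₆-components vanish, i.e.
δ̂η̂ = 0 and δ̂Φ̂(ξ̂) = 0). -/
def FibreC9C12 : Prop := S.deltaHatEta = 0 ∧ S.deltaHatPhiForm S.xi = 0

/-- The 3-dimensional fibres fall in the class C₆:
(∇̂_U Φ̂)(V,W) = (δ̂Φ̂(ξ̂)/2)(ĝ(U,W)η̂(V) - ĝ(U,V)η̂(W)). -/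
def FibreC6 : Prop :=
  ∀ U W₁ W₂, S.Vertical U → S.Vertical W₁ → S.Vertical W₂ →
    S.g W₁ (S.vNablaPhi U W₂) =
      algebraMap ℝ C (1/2) *
        (S.deltaHatPhiForm S.xi * (S.g U W₂ * S.eta W₁ - S.g U W₁ * S.eta W₂))

/-- The fibres inherit a C₄ ⊕ C₆ ⊕ C₇-structure: they are normal and satisfy
dΦ̂ = -2ω̂ ∧ Φ̂. -/
def FibreC4C6C7 : Prop :=
  (∀ U W, S.Vertical U → S.Vertical W →
    S.Nphi U W + ((2 : C) * S.dEta U W) • S.xi = 0)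
    ∧ ∀ U W₁ W₂, S.Vertical U → S.Vertical W₁ → S.Vertical W₂ →
        S.dPhi U W₁ W₂ = (-2 : C) * S.wedgePhi S.leeHat U W₁ W₂

/-- π has superminimal fibres: ∇_U φ = 0 for every vertical U. -/
def Superminimal : Prop := ∀ U E, S.Vertical U → S.nablaPhi U E = 0

/-- The fibres of π are totally umbilical submanifolds of M:
T_U W = ĝ(U,W)·H for the mean curvature vector field H. -/
def TotallyUmbilicalFibres : Prop :=
  ∃ H : V, S.v H = 0 ∧ ∀ U W, S.Vertical U → S.Vertical W → S.T U W = S.g U W • H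

end CCSub

namespace CCSub

section aux

variable {C : Type} [CommRing C] [Algebra ℝ C] {V : Type} [AddCommGroup V] [Module C V]
  {C' : Type} [CommRing C'] [Algebra ℝ C'] {V' : Type} [AddCommGroup V'] [Module C' V']

variable (S : CCSub C V C' V')

lemma g_add_right (X Y Z : V) : S.g X (Y + Z) = S.g X Y + S.g X Z := by
  rw [S.g_symm, S.g_add_left, S.g_symm Y, S.g_symm Z]

lemma g_smul_right (a : C) (X Y : V) : S.g X (a • Y) = a * S.g X Y := by
  rw [S.g_symm, S.g_smul_left, S.g_symm Y]

lemma g_neg_right (X Y : V) : S.g X (-Y) = -S.g X Y := by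
  rw [← neg_one_smul C Y, g_smul_right, neg_one_mul]

lemma g_sub_right (X Y Z : V) : S.g X (Y - Z) = S.g X Y - S.g X Z := by
  rw [sub_eq_add_neg, g_add_right, g_neg_right, sub_eq_add_neg]

lemma g_zero_right (X : V) : S.g X 0 = 0 := by
  rw [← zero_smul C (0 : V), g_smul_right, zero_mul]

lemma g_sum_right {ι : Type} (s : Finset ι) (X : V) (f : ι → V) :
    S.g X (∑ i ∈ s, f i) = ∑ i ∈ s, S.g X (f i) :=
  map_sum (AddMonoidHom.mk' (S.g X) (S.g_add_right X)) f s

/-- The metric is nondegenerate. -/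
lemma eq_zero_of_g (Z : V) (hZ : ∀ Y, S.g Y Z = 0) : Z = 0 := by
  rw [S.frame_complete Z]
  refine Finset.sum_eq_zero fun i _ => ?_
  rw [S.g_symm, hZ, zero_smul]

lemma D_one (X : V) : S.D X 1 = 0 := by
  simpa using S.D_mul X 1 1

lemma D_zero (X : V) : S.D X 0 = 0 := by
  simpa using S.D_add X 0 0

lemma D_neg_one (X : V) : S.D X (-1) = 0 := by
  have h := S.D_add X 1 (-1)
  rw [add_neg_cancel, D_zero, D_one, zero_add] at h
  exact h.symm

lemma nabla_zero_right (X : V) : S.nabla X 0 = 0 := by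
  simpa using S.nabla_add_right X 0 0

lemma v_zero : S.v 0 = 0 := by simpa using S.v_add 0 0

lemma h_add (X Y : V) : S.h (X + Y) = S.h X + S.h Y := by
  rw [S.h_eq, S.h_eq, S.h_eq, S.v_add]; abel

lemma v_h (X : V) : S.v (S.h X) = 0 := by
  have hX := S.v_add (S.h X) (S.v X)
  have hX' : S.h X + S.v X = X := by rw [S.h_eq]; abel
  rw [hX', S.v_idem] at hX
  simpa using hX

lemma g_vertical_horizontal {U X : V} (hU : S.v U = U) (hX : S.v X = 0) : S.g U X = 0 := by
  have h := S.vh_orth U X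
  rwa [hU, S.h_eq, hX, sub_zero] at h

lemma eta_horizontal {X : V} (hX : S.v X = 0) : S.eta X = 0 := by
  rw [S.eta_eq, S.g_symm]
  exact S.g_vertical_horizontal S.xi_vertical hX

lemma phi_horizontal' {X : V} (hX : S.v X = 0) : S.v (S.phi X) = 0 := by
  have h := S.phi_horizontal X
  rwa [S.h_eq, hX, sub_zero] at h

lemma phi_vertical' {U : V} (hU : S.v U = U) : S.v (S.phi U) = S.phi U := by
  have h := S.phi_vertical U
  rwa [hU] at h

lemma bracket_vertical' {U W : V} (hU : S.v U = U) (hW : S.v W = W) :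
    S.v (S.bracket U W) = S.bracket U W := by
  have h := S.bracket_vertical U W
  rwa [hU, hW] at h

lemma eq_zero_of_add_self {c : C} (h : c + c = 0) : c = 0 := by
  have h2 : algebraMap ℝ C (1/2) * 2 = 1 := by
    rw [← map_ofNat (algebraMap ℝ C) 2, ← map_mul]; norm_num
  linear_combination algebraMap ℝ C (1/2) * h - c * h2

lemma lee_add (X Y : V) : S.lee (X + Y) = S.lee X + S.lee Y := by
  simp only [lee, deltaPhiForm, S.phi_add, g_add_right, S.g_add_left, S.eta_eq,
    Finset.sum_add_distrib]
  ring

lemma lee_smul (a : C) (X : V) : S.lee (a • X) = a * S.lee X := by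
  simp only [lee, deltaPhiForm, S.phi_smul, g_smul_right, S.g_smul_left, S.eta_eq,
    ← Finset.mul_sum]
  ring

/-- The Lee vector field is the metric dual of the Lee form. -/
lemma g_leeVF (X : V) : S.g X S.leeVF = S.lee X := by
  conv_rhs => rw [S.frame_complete X]
  rw [leeVF, g_sum_right]
  refine Eq.trans ?_ (map_sum (AddMonoidHom.mk' S.lee S.lee_add) _ _).symm
  refine Finset.sum_congr rfl fun i _ => ?_
  rw [AddMonoidHom.mk'_apply, lee_smul, g_smul_right, mul_comm]

/-- For a unit field `U` orthogonal to `X`, constancy of `g(U, U)` and `g(X, U)` gives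
`g([X, U], U) = g(X, ∇_U U)`. -/
lemma g_bracket_unit {U X : V} (hU : S.g U U = 1) (hX : S.g X U = 0) :
    S.g U (S.bracket X U) = S.g X (S.nabla U U) := by
  have h1 := S.metric_compat X U U
  rw [hU, D_one, S.g_symm (S.nabla X U)] at h1
  have h1' := eq_zero_of_add_self h1.symm
  have h2 := S.metric_compat U X U
  rw [hX, D_zero, S.g_symm (S.nabla U X)] at h2
  rw [S.torsion_free, g_sub_right]
  linear_combination h1' + h2

lemma bracket_antisymm (X Y : V) : S.bracket X Y = -S.bracket Y X := by
  rw [S.torsion_free, S.torsion_free]; abel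

/-- The horizontal part of `∇_u u + ∇_{φu} φu` is `2 h(B)`, tested on horizontal fields. -/
lemma g_pair (hlee : S.LeeCond) {U X : V} (hU : S.v U = U) (hUU : S.g U U = 1)
    (hη : S.eta U = 0) (hX : S.v X = 0) :
    S.g X (S.nabla U U + S.nabla (S.phi U) (S.phi U)) = 2 * S.g X S.leeVF := by
  have hφU := S.phi_vertical' hU
  have hφX := S.phi_horizontal' hX
  have hφφ : S.phi (S.phi U) = -U := by rw [S.acm_phi_phi, hη, zero_smul, add_zero]
  have hφUφU : S.g (S.phi U) (S.phi U) = 1 := by rw [S.acm_compat, hUU, hη]; ring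
  have hXU : S.g X U = 0 := by rw [S.g_symm]; exact S.g_vertical_horizontal hU hX
  have hXφU : S.g X (S.phi U) = 0 := by
    rw [S.g_symm]; exact S.g_vertical_horizontal hφU hX
  have e1 : S.Phi U (S.phi U) = -1 := by rw [Phi, hφφ, g_neg_right, hUU]
  have e2 : S.Phi (S.phi U) X = 0 := S.g_vertical_horizontal hφU hφX
  have e3 : S.Phi X U = 0 := hXφU
  have e4 : S.Phi (S.bracket U (S.phi U)) X = 0 :=
    S.g_vertical_horizontal (S.bracket_vertical' hU hφU) hφX
  have e5 : S.Phi (S.bracket (S.phi U) X) U = -S.g X (S.nabla (S.phi U) (S.phi U)) := by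
    rw [Phi, S.g_symm, bracket_antisymm, g_neg_right, S.g_bracket_unit hφUφU hXφU]
  have e6 : S.Phi (S.bracket X U) (S.phi U) = -S.g X (S.nabla U U) := by
    rw [Phi, hφφ, g_neg_right, S.g_symm, S.g_bracket_unit hUU hXU]
  have key := hlee U (S.phi U) X
  rw [dPhi, wedgePhi, e1, e2, e3, e4, e5, e6, D_zero, D_zero, D_neg_one] at key
  have h3 : algebraMap ℝ C (1/3) * 3 = 1 := by
    rw [← map_ofNat (algebraMap ℝ C) 3, ← map_mul]; norm_num
  rw [g_add_right, g_leeVF]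
  linear_combination 3 * key - (S.g X (S.nabla U U) + S.g X (S.nabla (S.phi U) (S.phi U))
    - 2 * S.lee X) * h3

lemma T_vertical {U : V} (hU : S.v U = U) : S.T U U = S.h (S.nabla U U) := by
  rw [T, hU, S.h_eq U, hU, sub_self, nabla_zero_right, v_zero, add_zero]

/-- Each `φ`-invariant pair of the adapted frame contributes `2 h(B)` to the mean curvature. -/
lemma T_pair (hlee : S.LeeCond) {U : V} (hU : S.v U = U) (hUU : S.g U U = 1)
    (hη : S.eta U = 0) :
    S.T U U + S.T (S.phi U) (S.phi U) = 2 • S.h S.leeVF := by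
  rw [S.T_vertical hU, S.T_vertical (S.phi_vertical' hU), ← h_add, ← sub_eq_zero]
  refine S.eq_zero_of_g _ fun Y => ?_
  -- `g` pairs `h W` with `Y` as it pairs `W` with `h Y`
  have hsymm : ∀ W, S.g Y (S.h W) = S.g (S.h Y) W := fun W => by
    have a := S.vh_orth Y W
    have b := S.vh_orth W Y
    have c := S.g_add_left (S.h Y) (S.v Y) (S.h W)
    have d := S.g_add_right (S.h Y) (S.h W) (S.v W)
    have hY : S.h Y + S.v Y = Y := by rw [S.h_eq]; abel
    have hW : S.h W + S.v W = W := by rw [S.h_eq]; abel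
    rw [hY] at c
    rw [hW, S.g_symm _ (S.v W)] at d
    linear_combination c - d + a - b
  rw [two_smul, g_sub_right, g_add_right, hsymm, hsymm, S.g_pair hlee hU hUU hη (S.v_h Y)]
  ring

end aux

end CCSub

/-- Corollary 2.6: for a contact-complex Riemannian submersion
with dim M ≥ 5 and dΦ = -2ω∧Φ, whose fibres have dimension 2r+1, the trace
N = Σᵢ(T_{uᵢ}uᵢ + T_{φuᵢ}φuᵢ) + T_ξξ computed with respect to an adapted
orthonormal vertical frame {u₁,...,u_r, φu₁,...,φu_r, ξ} satisfies
N = 2r·h(B) + T_ξξ, B the Lee vector field. -/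
theorem statement5
    {C : Type} [CommRing C] [Algebra ℝ C] {V : Type} [AddCommGroup V] [Module C V]
    {C' : Type} [CommRing C'] [Algebra ℝ C'] {V' : Type} [AddCommGroup V'] [Module C' V']
    (S : CCSub C V C' V')
    (hdim : 2 ≤ S.m) (hlee : S.LeeCond) :
    S.meanCurv = (2 * S.r) • S.h S.leeVF + S.T S.xi S.xi := by
  have hsum : ∀ i, S.T (S.u i) (S.u i) + S.T (S.phi (S.u i)) (S.phi (S.u i))
      = 2 • S.h S.leeVF := fun i =>
    S.T_pair hlee (S.u_vertical i) (by rw [S.u_orthonormal, if_pos rfl]) (S.u_eta i)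
  rw [CCSub.meanCurv, Finset.sum_congr rfl fun i _ => hsum i, Finset.sum_const,
    Finset.card_univ, Fintype.card_fin, ← mul_smul, mul_comm S.r 2]
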